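/- arXiv:math/0502362 — 4 statements merged into one kernel-verified Lean document; each statement's English description precedes it below -/
import Mathlib

section
/- Let g ≥ 1 and let F be a positive definite symmetric g×g real matrix with lattice minimum m(F) = min{ xᵀ F x : x ∈ ℤ^g, x ≠ 0 }. Then for every nonzero positive semidefinite symmetric g×g integer matrix B one has trace(F·B) ≥ m(F); moreover, trace(F·B) = m(F) holds if and only if B = x xᵀ for some x ∈ ℤ^g with xᵀ F x = m(F). In particular, if B has rank at least 2, then trace(F·B) > m(F). -/
/-!
The proof reduces to the nondegenerate case and then applies Minkowski's convex body theorem.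

**Reduction** (`exists_nondegenerate_reduction`). The image of `B : ℤ^g → ℤ^g` is a free `ℤ`-module
of some rank `r`. This gives a factorization `B = Cᵀ A C`, where `A` is a nonsingular integer
`r × r` matrix and the integer `r × g` matrix `C` has an integral right inverse. Hence
`tr (F B) = tr (G A)` with `G = C F Cᵀ` positive definite, `A` is positive definite with
`det A ≥ 1`, and `y ↦ Cᵀ y` embeds `ℤ^r` into `ℤ^g`, carrying the form `G` to the form `F`.

**Rank one.** If `r = 1`, then `B = a c cᵀ` with an integer `a ≥ 1` and `c ≠ 0`, so
`tr (F B) = a F(c)`. This exceeds `m` unless `a = 1`.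

**Rank at least two** (`exists_int_quadForm_lt_trace`). Diagonalize simultaneously:
`A = W Wᵀ` and `Wᵀ G W = diag(l)` with all `l i > 0`, so that `tr (G A) = ∑ l i`. In the
coordinates `x = W z`, the body `{x | G(x) < tr (G A)}` is the open ellipsoid
`{z | ∑ l i z i ^ 2 < ∑ l i}`. This ellipsoid contains the open cube `(-1, 1)^r`, and for `r ≥ 2`
it also contains an open set outside the closed cube, so its volume is greater than `2 ^ r`. Since
`|det W| = √(det A) ≥ 1`, the same holds for the body in the coordinates `x`. Minkowski's theorem
then yields a nonzero integer vector `y` with `G(y) < tr (G A)`, whence `m < tr (F B)`.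
-/


open Matrix

/-- The value of the quadratic form attached to a real matrix `F` at an integer vector. -/
def quadZ {g : ℕ} (F : Matrix (Fin g) (Fin g) ℝ) (x : Fin g → ℤ) : ℝ :=
  (fun i => (x i : ℝ)) ⬝ᵥ F.mulVec (fun i => (x i : ℝ))

open MeasureTheory in
/-- The ellipsoid contains the open cube of volume `2 ^ r`. Since it reaches further than the cube
along a coordinate axis once `r ≥ 2`, the inequality is strict. -/
lemma two_pow_lt_volume_ellipsoid {r : ℕ} (hr : 2 ≤ r) (l : Fin r → ℝ) (hl : ∀ i, 0 < l i) :
    (2 : ENNReal) ^ r < volume {z : Fin r → ℝ | ∑ i, l i * z i ^ 2 < ∑ i, l i} := by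
  set E := {z : Fin r → ℝ | ∑ i, l i * z i ^ 2 < ∑ i, l i} with hE
  have hEo : IsOpen E := isOpen_lt (by fun_prop : Continuous fun z : Fin r → ℝ => ∑ i, l i * z i ^ 2) continuous_const
  let i0 : Fin r := ⟨0, by omega⟩
  let i1 : Fin r := ⟨1, by omega⟩
  have hball : Metric.ball (0 : Fin r → ℝ) 1 ⊆ E := by
    intro z hz
    rw [mem_ball_zero_iff, pi_norm_lt_iff one_pos] at hz
    change ∑ i, l i * z i ^ 2 < ∑ i, l i
    refine Finset.sum_lt_sum_of_nonempty ⟨i0, Finset.mem_univ _⟩ fun i _ => ?_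
    have h1 := hz i
    rw [Real.norm_eq_abs] at h1
    have h2 : z i ^ 2 < 1 := (sq_lt_one_iff_abs_lt_one _).2 h1
    have := hl i
    nlinarith
  have h01 : i0 ≠ i1 := by simp [i0, i1]
  have hUo : IsOpen (E \ Metric.closedBall 0 1) := hEo.sdiff Metric.isClosed_closedBall
  have hUne : (E \ Metric.closedBall (0 : Fin r → ℝ) 1).Nonempty := by
    have hsum : l i0 + l i1 ≤ ∑ i, l i := by
      rw [← Finset.sum_pair h01]
      exact Finset.sum_le_sum_of_subset_of_nonneg (Finset.subset_univ _) fun i _ _ => (hl i).le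
    have hlt : 1 < Real.sqrt ((l i0 + l i1) / l i0) := by
      rw [Real.lt_sqrt (by norm_num), lt_div_iff₀ (hl i0)]
      linarith [hl i1]
    -- Any `t > 1` with `l i0 * t ^ 2 < l i0 + l i1` gives a point `t • e_{i0}` of the ellipsoid
    -- outside the closed cube.
    obtain ⟨t, ht1, ht2⟩ := exists_between hlt
    rw [Real.lt_sqrt (by linarith), lt_div_iff₀ (hl i0)] at ht2
    refine ⟨Pi.single i0 t, ?_, ?_⟩
    · change ∑ i, l i * (Pi.single i0 t : Fin r → ℝ) i ^ 2 < ∑ i, l i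
      rw [Finset.sum_eq_single i0]
      · rw [Pi.single_eq_same]; linarith
      · intro b _ hb; simp [hb]
      · simp
    · rw [mem_closedBall_zero_iff, not_le]
      refine lt_of_lt_of_le ?_ (norm_le_pi_norm _ i0)
      rw [Pi.single_eq_same, Real.norm_eq_abs]
      exact ht1.trans_le (le_abs_self t)
  have hvb : volume (Metric.ball (0 : Fin r → ℝ) 1) = 2 ^ r := by
    rw [Real.volume_pi_ball _ one_pos]
    simp
  have hpos := hUo.measure_pos volume hUne
  have hdisj : Disjoint (Metric.ball (0 : Fin r → ℝ) 1) (E \ Metric.closedBall 0 1) :=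
    Set.disjoint_left.2 fun z hz hz' => hz'.2 (Metric.ball_subset_closedBall hz)
  calc (2 : ENNReal) ^ r < 2 ^ r + volume (E \ Metric.closedBall 0 1) :=
        ENNReal.lt_add_right (by finiteness) hpos.ne'
    _ = volume (Metric.ball (0 : Fin r → ℝ) 1 ∪ E \ Metric.closedBall 0 1) := by
        rw [measure_union hdisj hUo.measurableSet, hvb]
    _ ≤ volume E := measure_mono (Set.union_subset hball Set.sdiff_subset)

lemma convex_ellipsoid {r : ℕ} (l : Fin r → ℝ) (hl : ∀ i, 0 < l i) (c : ℝ) :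
    Convex ℝ {z : Fin r → ℝ | ∑ i, l i * z i ^ 2 < c} := by
  have h : ConvexOn ℝ Set.univ fun z : Fin r → ℝ => ∑ i, l i * z i ^ 2 := by
    refine ⟨convex_univ, fun x _ y _ a b ha hb hab => ?_⟩
    simp only [smul_eq_mul, Finset.mul_sum, ← Finset.sum_add_distrib]
    refine Finset.sum_le_sum fun i _ => ?_
    obtain rfl : b = 1 - a := by linarith
    simp only [Pi.add_apply, Pi.smul_apply, smul_eq_mul]
    have := mul_nonneg (mul_nonneg (mul_nonneg ha hb) (hl i).le) (sq_nonneg (x i - y i))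
    nlinarith
  simpa using h.convex_lt c

/-- Two positive definite forms `A⁻¹` and `G` are diagonalized by one change of basis: write
`A = Nᵀ N` and rotate by an orthonormal eigenbasis of `N G Nᵀ`. -/
lemma exists_simultaneous_diagonalization {r : ℕ} {G A : Matrix (Fin r) (Fin r) ℝ}
    (hG : G.PosDef) (hA : A.PosDef) :
    ∃ (W : Matrix (Fin r) (Fin r) ℝ) (l : Fin r → ℝ), (∀ i, 0 < l i) ∧ A = W * Wᵀ ∧
      Wᵀ * G * W = diagonal l := by
  open scoped MatrixOrder in
  obtain ⟨N, hN⟩ := CStarAlgebra.nonneg_iff_eq_star_mul_self.mp hA.posSemidef.nonneg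
  have hN' : A = Nᵀ * N := by rw [hN, star_eq_conjTranspose, conjTranspose_eq_transpose_of_trivial]
  have hNu : IsUnit Nᵀ := by
    have := hA.det_pos
    rw [hN', det_mul] at this
    rw [isUnit_iff_isUnit_det]
    exact isUnit_iff_ne_zero.2 (left_ne_zero_of_mul this.ne')
  have hP : (N * G * Nᵀ).PosDef := by
    have h := hG.conjTranspose_mul_mul_same (B := Nᵀ) (mulVec_injective_of_isUnit hNu)
    simpa [conjTranspose_eq_transpose_of_trivial] using h
  have hH := hP.isHermitian
  have hU := mem_unitaryGroup_iff.1 hH.eigenvectorUnitary.2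
  have hD := hH.conjStarAlgAut_star_eigenvectorUnitary
  rw [Unitary.conjStarAlgAut_star_apply] at hD
  set U : Matrix (Fin r) (Fin r) ℝ := hH.eigenvectorUnitary.1 with hUdef
  rw [star_eq_conjTranspose, conjTranspose_eq_transpose_of_trivial] at hU hD
  refine ⟨Nᵀ * U, hH.eigenvalues, hP.eigenvalues_pos, ?_, ?_⟩
  · rw [transpose_mul, transpose_transpose, hN', Matrix.mul_assoc, ← Matrix.mul_assoc U, hU,
      Matrix.one_mul]
  · rw [transpose_mul, transpose_transpose]
    simp only [Matrix.mul_assoc] at hD ⊢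
    rw [hD]
    rfl

open MeasureTheory in
/-- The strict inequality in rank at least two, from Minkowski's theorem applied to the body
`{x | xᵀ G x < tr (G A)}`. -/
lemma exists_int_quadForm_lt_trace {r : ℕ} (hr : 2 ≤ r) {G A : Matrix (Fin r) (Fin r) ℝ}
    (hG : G.PosDef) (hA : A.PosDef) (hdet : 1 ≤ A.det) :
    ∃ y : Fin r → ℤ, y ≠ 0 ∧ quadZ G y < (G * A).trace := by
  obtain ⟨W, l, hl, hAW, hWG⟩ := exists_simultaneous_diagonalization hG hA
  have htr : (G * A).trace = ∑ i, l i := by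
    rw [hAW, ← Matrix.mul_assoc, trace_mul_comm, ← Matrix.mul_assoc, hWG, trace_diagonal]
  set E := {z : Fin r → ℝ | ∑ i, l i * z i ^ 2 < ∑ i, l i} with hE
  have hvol := two_pow_lt_volume_ellipsoid hr l hl
  have hW : 1 ≤ |W.det| := by
    rw [hAW, det_mul, det_transpose, ← sq] at hdet
    exact (one_le_sq_iff_one_le_abs _).1 hdet
  have hvolW : volume E ≤ volume (W.toLin' '' E) := by
    rw [Measure.addHaar_image_linearMap, LinearMap.det_toLin']
    exact le_mul_of_one_le_left' (by simpa using ENNReal.ofReal_le_ofReal hW)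
  have hfd : volume (ZSpan.fundamentalDomain (Pi.basisFun ℝ (Fin r))) = 1 := by
    rw [ZSpan.fundamentalDomain_pi_basisFun, volume_pi, Measure.pi_pi]
    simp
  have : Countable (Submodule.span ℤ (Set.range (Pi.basisFun ℝ (Fin r)))).toAddSubgroup :=
    inferInstanceAs (Countable (Submodule.span ℤ (Set.range (Pi.basisFun ℝ (Fin r)))))
  obtain ⟨⟨x, hxL⟩, hx0, hxE⟩ := exists_ne_zero_mem_lattice_of_measure_mul_two_pow_lt_measure
    (ZSpan.isAddFundamentalDomain' (Pi.basisFun ℝ (Fin r)) volume)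
    (s := W.toLin' '' E)
    (by
      rintro _ ⟨z, hz, rfl⟩
      exact ⟨-z, by simpa [hE] using hz, map_neg _ _⟩)
    ((convex_ellipsoid l hl _).linear_image _)
    (by
      rw [hfd, one_mul, Module.finrank_fin_fun]
      exact hvol.trans_le hvolW)
  obtain ⟨z, hz, hzx⟩ := hxE
  have hxL' := ((Pi.basisFun ℝ (Fin r)).mem_span_iff_repr_mem ℤ x).1 hxL
  choose y hy using hxL'
  have hyx : (fun i => (y i : ℝ)) = x := by
    funext i
    simpa using hy i
  refine ⟨y, ?_, ?_⟩
  · rintro rfl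
    apply hx0
    ext i
    simp [← hyx]
  · rw [htr]
    have hxz : x = W *ᵥ z := hzx.symm.trans (toLin'_apply W z)
    have : quadZ G y = ∑ i, l i * z i ^ 2 := by
      rw [quadZ, hyx, hxz, mulVec_mulVec, dotProduct_mulVec, vecMul_mulVec, ← dotProduct_mulVec,
        ← Matrix.mul_assoc, hWG, dotProduct]
      exact Finset.sum_congr rfl fun i _ => by rw [mulVec_diagonal]; ring
    rw [this]
    exact hz

/-- The map `C` records the coordinates of `B x` in a `ℤ`-basis of the image of `B`. It is onto, so
it has a section `S`, and symmetry of `B` lets the factorization `B = P C` be rewritten with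
`P = Cᵀ (Sᵀ B S)`. -/
lemma exists_nondegenerate_reduction {g : ℕ} {B : Matrix (Fin g) (Fin g) ℤ} (hB : Bᵀ = B) :
    ∃ (r : ℕ) (C : Matrix (Fin r) (Fin g) ℤ) (S : Matrix (Fin g) (Fin r) ℤ),
      C * S = 1 ∧ B = Cᵀ * (Sᵀ * B * S) * C ∧ (Sᵀ * B * S).det ≠ 0 := by
  let R := LinearMap.range B.toLin'
  let b := Module.finBasis ℤ R
  set r := Module.finrank ℤ R
  let p : (Fin g → ℤ) →ₗ[ℤ] (Fin r → ℤ) := b.equivFun.toLinearMap ∘ₗ B.toLin'.rangeRestrict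
  let q : (Fin r → ℤ) →ₗ[ℤ] (Fin g → ℤ) := R.subtype ∘ₗ b.equivFun.symm.toLinearMap
  have hp : Function.Surjective p :=
    b.equivFun.surjective.comp (LinearMap.surjective_rangeRestrict _)
  have hq : Function.Injective q :=
    Subtype.val_injective.comp b.equivFun.symm.injective
  have hqp : q ∘ₗ p = B.toLin' := by
    ext1 i
    ext j
    simp [p, q]
  obtain ⟨s, hs⟩ := Module.projective_lifting_property p LinearMap.id hp
  set C := LinearMap.toMatrix' p
  set P := LinearMap.toMatrix' q
  set S := LinearMap.toMatrix' s
  have hCS : C * S = 1 := by rw [← LinearMap.toMatrix'_comp, hs, LinearMap.toMatrix'_id]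
  have hPC : P * C = B := by rw [← LinearMap.toMatrix'_comp, hqp, LinearMap.toMatrix'_toLin']
  have hBS : B * S = P := by rw [← hPC, Matrix.mul_assoc, hCS, Matrix.mul_one]
  have hP : P = Cᵀ * (Sᵀ * B * S) := by
    rw [Matrix.mul_assoc Sᵀ, hBS]
    calc P = Bᵀ * S := by rw [hB, hBS]
      _ = Cᵀ * (Pᵀ * S) := by rw [← hPC, transpose_mul, Matrix.mul_assoc]
      _ = Cᵀ * (Sᵀ * P) := by rw [← hBS, transpose_mul, hB, Matrix.mul_assoc]
  refine ⟨r, C, S, hCS, by rw [← hP, hPC], fun hdet => ?_⟩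
  obtain ⟨v, hv, hv0⟩ := exists_mulVec_eq_zero_iff.2 hdet
  apply hv
  apply hq
  rw [map_zero, ← LinearMap.toMatrix'_mulVec]
  change P *ᵥ v = 0
  rw [hP, ← mulVec_mulVec, hv0, mulVec_zero]

lemma quadZ_transpose_mulVec {g r : ℕ} (F : Matrix (Fin g) (Fin g) ℝ)
    (C : Matrix (Fin r) (Fin g) ℤ) (y : Fin r → ℤ) :
    quadZ F (Cᵀ *ᵥ y) =
      quadZ (C.map ((↑) : ℤ → ℝ) * F * (C.map ((↑) : ℤ → ℝ))ᵀ) y := by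
  have h : (fun i => ((Cᵀ *ᵥ y) i : ℝ)) = (C.map ((↑) : ℤ → ℝ))ᵀ *ᵥ fun i => (y i : ℝ) := by
    funext i
    simp [mulVec, dotProduct]
  rw [quadZ, quadZ, h, mulVec_mulVec, dotProduct_mulVec, vecMul_mulVec, ← dotProduct_mulVec,
    transpose_transpose, Matrix.mul_assoc]

lemma trace_mul_vecMulVec_self {g : ℕ} (F : Matrix (Fin g) (Fin g) ℝ) (x : Fin g → ℤ) :
    (F * (vecMulVec x x).map ((↑) : ℤ → ℝ)).trace = quadZ F x := by
  have h : (vecMulVec x x).map ((↑) : ℤ → ℝ) =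
      vecMulVec (fun i => (x i : ℝ)) (fun i => (x i : ℝ)) := by
    ext i j
    simp [vecMulVec_apply]
  rw [h, mul_vecMulVec, trace_vecMulVec, dotProduct_comm, quadZ]

lemma map_intCast_mul {a b c : ℕ} (M : Matrix (Fin a) (Fin b) ℤ) (N : Matrix (Fin b) (Fin c) ℤ) :
    (M * N).map ((↑) : ℤ → ℝ) = M.map ((↑) : ℤ → ℝ) * N.map ((↑) : ℤ → ℝ) :=
  Matrix.map_mul (f := Int.castRingHom ℝ)

/-- The dichotomy behind all parts of the theorem: either the trace exceeds the lattice minimum, or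
`B` is the rank-one form of a nonzero integer vector. -/
lemma lt_trace_or_eq_vecMulVec {g : ℕ} {F : Matrix (Fin g) (Fin g) ℝ} (hF : F.PosDef)
    {m : ℝ} (hm : IsLeast {q : ℝ | ∃ x : Fin g → ℤ, x ≠ 0 ∧ q = quadZ F x} m)
    {B : Matrix (Fin g) (Fin g) ℤ} (hB0 : B ≠ 0)
    (hBpsd : (B.map ((↑) : ℤ → ℝ)).PosSemidef) :
    m < (F * B.map ((↑) : ℤ → ℝ)).trace ∨ ∃ x : Fin g → ℤ, x ≠ 0 ∧ B = vecMulVec x x := by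
  have hm0 : 0 < m := by
    obtain ⟨x, hx0, rfl⟩ := hm.1
    refine hF.dotProduct_mulVec_pos (x := fun i => (x i : ℝ)) fun h => hx0 ?_
    funext i
    simpa using congrFun h i
  have hBt : Bᵀ = B := by
    ext i j
    have := congrFun (congrFun hBpsd.isHermitian i) j
    simpa using this
  obtain ⟨r, C, S, hCS, hBC, hdet⟩ := exists_nondegenerate_reduction hBt
  set A := Sᵀ * B * S with hA
  set CR := C.map ((↑) : ℤ → ℝ) with hCR
  set AR := A.map ((↑) : ℤ → ℝ) with hAR
  have hARS : AR = (S.map ((↑) : ℤ → ℝ))ᵀ * B.map ((↑) : ℤ → ℝ) * S.map ((↑) : ℤ → ℝ) := by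
    rw [hAR, hA, map_intCast_mul, map_intCast_mul, transpose_map]
  have hARdet : AR.det = (A.det : ℝ) := (Int.cast_det A).symm
  have hARpd : AR.PosDef := by
    have h1 : AR.PosSemidef := by
      have h := hBpsd.conjTranspose_mul_mul_same (S.map ((↑) : ℤ → ℝ))
      rwa [conjTranspose_eq_transpose_of_trivial, ← hARS] at h
    rw [h1.posDef_iff_det_ne_zero, hARdet]
    exact_mod_cast hdet
  have hdet1 : 1 ≤ A.det := by
    have := hARpd.det_pos
    rw [hARdet] at this
    exact_mod_cast this
  have hCinj : ∀ y : Fin r → ℤ, y ≠ 0 → Cᵀ *ᵥ y ≠ 0 := by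
    intro y hy h
    apply hy
    have := congrArg (Sᵀ *ᵥ ·) h
    simpa [mulVec_mulVec, ← transpose_mul, hCS] using this
  have htr : (F * B.map ((↑) : ℤ → ℝ)).trace = (CR * F * CRᵀ * AR).trace := by
    rw [hBC, map_intCast_mul, map_intCast_mul, transpose_map, ← Matrix.mul_assoc, trace_mul_comm]
    simp only [Matrix.mul_assoc]
    rfl
  have hGpd : (CR * F * CRᵀ).PosDef := by
    have hinj : Function.Injective CRᵀ.mulVec := by
      refine Function.LeftInverse.injective (g := (S.map ((↑) : ℤ → ℝ))ᵀ.mulVec) fun v => ?_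
      rw [mulVec_mulVec, ← transpose_mul, ← map_intCast_mul, hCS]
      simp
    have h := hF.conjTranspose_mul_mul_same hinj
    simpa [conjTranspose_eq_transpose_of_trivial] using h
  obtain hr | hr | hr : r = 0 ∨ r = 1 ∨ 2 ≤ r := by omega
  · subst hr
    exact absurd (by rw [hBC]; ext i j; simp [Matrix.mul_apply]) hB0
  · subst hr
    set c := Cᵀ *ᵥ 1 with hc
    have hci : ∀ i, c i = C 0 i := fun i => by simp [hc, mulVec, dotProduct]
    have hc0 : c ≠ 0 := hCinj _ one_ne_zero
    rw [det_fin_one] at hdet1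
    have hBcc : B = A 0 0 • vecMulVec c c := by
      rw [hBC]
      ext i j
      simp [Matrix.mul_apply, vecMulVec_apply, hci]
      ring
    have hmc : m ≤ quadZ F c := hm.2 ⟨c, hc0, rfl⟩
    have htrc : (F * B.map ((↑) : ℤ → ℝ)).trace = A 0 0 * quadZ F c := by
      have : B.map ((↑) : ℤ → ℝ) = (A 0 0 : ℝ) • (vecMulVec c c).map ((↑) : ℤ → ℝ) := by
        conv_lhs => rw [hBcc]
        ext i j
        rw [map_apply, Matrix.smul_apply, smul_eq_mul, Int.cast_mul]
        rfl
      rw [this, Matrix.mul_smul, trace_smul, trace_mul_vecMulVec_self, smul_eq_mul]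
    obtain h1 | h1 : A 0 0 = 1 ∨ 2 ≤ A 0 0 := by omega
    · right
      exact ⟨c, hc0, by rw [h1, one_smul] at hBcc; exact hBcc⟩
    · left
      have h2 : (2 : ℝ) ≤ A 0 0 := by exact_mod_cast h1
      rw [htrc]
      nlinarith
  · left
    obtain ⟨y, hy0, hy⟩ := exists_int_quadForm_lt_trace hr hGpd hARpd
      (by rw [hARdet]; exact_mod_cast hdet1)
    rw [htr]
    rw [← quadZ_transpose_mulVec] at hy
    exact (hm.2 ⟨_, hCinj y hy0, rfl⟩).trans_lt hy

/-- If `F` is positive definite with lattice minimum `m`, then for every nonzero positive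
semidefinite symmetric integer matrix `B` one has `trace (F * B) ≥ m`, with equality iff
`B = x xᵀ` for a minimal vector `x` of `F`; in particular the inequality is strict if
`B` has rank at least `2`. -/
theorem trace_pairing_min_of_posDef
    (g : ℕ) (hg : 1 ≤ g) (F : Matrix (Fin g) (Fin g) ℝ) (hF : F.PosDef)
    (m : ℝ) (hm : IsLeast {q : ℝ | ∃ x : Fin g → ℤ, x ≠ 0 ∧ q = quadZ F x} m)
    (B : Matrix (Fin g) (Fin g) ℤ) (hB0 : B ≠ 0)
    (hBpsd : (B.map ((↑) : ℤ → ℝ)).PosSemidef) :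
    m ≤ (F * B.map ((↑) : ℤ → ℝ)).trace ∧
    ((F * B.map ((↑) : ℤ → ℝ)).trace = m ↔
      ∃ x : Fin g → ℤ, B = Matrix.vecMulVec x x ∧ quadZ F x = m) ∧
    (2 ≤ (B.map ((↑) : ℤ → ℝ)).rank → m < (F * B.map ((↑) : ℤ → ℝ)).trace) := by
  have key := lt_trace_or_eq_vecMulVec hF hm hB0 hBpsd
  have hle : m ≤ (F * B.map ((↑) : ℤ → ℝ)).trace := by
    obtain h | ⟨x, hx0, rfl⟩ := key
    · exact h.le
    · rw [trace_mul_vecMulVec_self]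
      exact hm.2 ⟨x, hx0, rfl⟩
  have heq : (F * B.map ((↑) : ℤ → ℝ)).trace = m ↔
      ∃ x : Fin g → ℤ, B = Matrix.vecMulVec x x ∧ quadZ F x = m := by
    constructor
    · intro h
      obtain h' | ⟨x, _, rfl⟩ := key
      · exact absurd h h'.ne'
      · exact ⟨x, rfl, by rw [← h, trace_mul_vecMulVec_self]⟩
    · rintro ⟨x, rfl, hx⟩
      rw [trace_mul_vecMulVec_self, hx]
  refine ⟨hle, heq, fun hrank => lt_of_le_of_ne hle fun h => ?_⟩
  obtain ⟨x, rfl, _⟩ := heq.1 h.symm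
  have hmap : (vecMulVec x x).map ((↑) : ℤ → ℝ) =
      vecMulVec (fun i => (x i : ℝ)) (fun i => (x i : ℝ)) := by
    ext i j
    simp [vecMulVec_apply]
  rw [hmap] at hrank
  have := rank_vecMulVec_le (fun i => (x i : ℝ)) (fun i => (x i : ℝ))
  omega
end

section
/- Let r ≥ 1 and let f be a positive definite symmetric r×r real matrix with lattice minimum a = min{ xᵀ f x : x ∈ ℤ^r, x ≠ 0 } and set of minimal vectors Min(f) = { x ∈ ℤ^r \ {0} : xᵀ f x = a }. Define the positive definite quadratic form f₁ on ℝ^{r+1} by f₁(x, t) = xᵀ f x + a t² for x ∈ ℝ^r, t ∈ ℝ. Then the lattice minimum of f₁ (the minimum of f₁ over nonzero vectors of ℤ^{r+1}) equals a, and the set of minimal vectors of f₁ is exactly { (x, 0) : x ∈ Min(f) } ∪ { (0, 1), (0, −1) } (where 0 denotes the zero vector of ℤ^r). -/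
/-!
Write `f₁(x, t) = f(x) + a t²`. The minimum `a` is positive, being a value of a positive definite form at a nonzero vector. For
`(x, t) ≠ 0` there are three cases. If `t = 0`, then `x ≠ 0` and `f₁(x, 0) = f(x) ≥ a`. If `x = 0`,
then `t ≠ 0` and `f₁(0, t) = a t² ≥ a`, with equality only for `t = ±1`. If both are nonzero, then
`f₁(x, t) ≥ a + a > a`. So `a` is the minimum and the vectors attaining it can be read off.
-/

open Matrix

lemma quadZ_zero {g : ℕ} (F : Matrix (Fin g) (Fin g) ℝ) : quadZ F 0 = 0 := by
  simp [quadZ]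

lemma quadZ_pos {g : ℕ} {F : Matrix (Fin g) (Fin g) ℝ} (hF : F.PosDef) {x : Fin g → ℤ}
    (hx : x ≠ 0) : 0 < quadZ F x := by
  have hx' : (fun i => (x i : ℝ)) ≠ 0 := by
    intro h
    apply hx
    funext i
    exact Int.cast_eq_zero.mp (congrFun h i)
  simpa [quadZ] using hF.dotProduct_mulVec_pos hx'

lemma one_le_sq_cast {t : ℤ} (ht : t ≠ 0) : (1 : ℝ) ≤ (t : ℝ) ^ 2 := by
  have h : 0 < t ^ 2 := by positivity
  exact_mod_cast h

/-- If `f` is positive definite with lattice minimum `a`, then the form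
`f₁(x, t) = f(x) + a t²` on `ℤ^r × ℤ` has lattice minimum `a`, and its minimal vectors are
exactly the `(x, 0)` with `x` a minimal vector of `f`, together with `(0, 1)` and `(0, -1)`. -/
theorem min_vectors_of_adjoin_square
    (r : ℕ) (hr : 1 ≤ r) (f : Matrix (Fin r) (Fin r) ℝ) (hf : f.PosDef)
    (a : ℝ) (ha : IsLeast {q : ℝ | ∃ x : Fin r → ℤ, x ≠ 0 ∧ q = quadZ f x} a) :
    IsLeast {q : ℝ | ∃ p : (Fin r → ℤ) × ℤ, p ≠ 0 ∧
        q = quadZ f p.1 + a * (p.2 : ℝ) ^ 2} a ∧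
    {p : (Fin r → ℤ) × ℤ | p ≠ 0 ∧ quadZ f p.1 + a * (p.2 : ℝ) ^ 2 = a} =
      {p : (Fin r → ℤ) × ℤ | p.2 = 0 ∧ p.1 ≠ 0 ∧ quadZ f p.1 = a} ∪
      {p : (Fin r → ℤ) × ℤ | p.1 = 0 ∧ (p.2 = 1 ∨ p.2 = -1)} := by
  obtain ⟨⟨x₀, hx₀, hax₀⟩, hmin⟩ := ha
  have hpos : 0 < a := hax₀ ▸ quadZ_pos hf hx₀
  have hle : ∀ x : Fin r → ℤ, x ≠ 0 → a ≤ quadZ f x := fun x hx => hmin ⟨x, hx, rfl⟩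
  have hsq : ∀ t : ℤ, t ≠ 0 → a ≤ a * (t : ℝ) ^ 2 := fun t ht =>
    le_mul_of_one_le_right hpos.le (one_le_sq_cast ht)
  refine ⟨⟨⟨(x₀, 0), by simp [hx₀], by simp [hax₀]⟩, ?_⟩, ?_⟩
  · rintro q ⟨⟨x, t⟩, hp, rfl⟩
    by_cases ht : t = 0
    · subst ht
      have hx : x ≠ 0 := by rintro rfl; exact hp rfl
      simpa using hle x hx
    · have h₁ := hsq t ht
      have h₂ : 0 ≤ quadZ f x := by
        by_cases hx : x = 0
        · rw [hx, quadZ_zero]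
        · exact (quadZ_pos hf hx).le
      dsimp only
      linarith
  · ext ⟨x, t⟩
    simp only [Set.mem_ofPred_eq, Set.mem_union]
    constructor
    · rintro ⟨hp, h⟩
      by_cases ht : t = 0
      · subst ht
        exact Or.inl ⟨rfl, by rintro rfl; exact hp rfl, by simpa using h⟩
      · by_cases hx : x = 0
        · subst hx
          rw [quadZ_zero, zero_add] at h
          have h' : (t : ℝ) ^ 2 = 1 := (mul_eq_left₀ hpos.ne').mp h
          exact Or.inr ⟨rfl, sq_eq_one_iff.mp (by exact_mod_cast h')⟩
        · linarith [hle x hx, hsq t ht]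
    · rintro (⟨rfl, hx, h⟩ | ⟨rfl, rfl | rfl⟩)
      · exact ⟨by simp [hx], by simpa using h⟩
      · simp [quadZ_zero]
      · simp [quadZ_zero]
end

section
/- Let g ≥ 1 and let Sp_{2g}(ℤ) act on ℚ^{2g} by matrix multiplication (the standard representation). Then H¹(Sp_{2g}(ℤ), ℚ^{2g}) = 0. Concretely: every 1-cocycle c : Sp_{2g}(ℤ) → ℚ^{2g}, i.e. every map satisfying c(AB) = c(A) + A·c(B) for all A, B ∈ Sp_{2g}(ℤ), is a coboundary: there exists v ∈ ℚ^{2g} such that c(A) = A·v − v for all A ∈ Sp_{2g}(ℤ). -/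
/-! The central element `-1 ∈ Sp_{2g}(ℤ)` acts on `ℚ^{2g}` by `-1`, and a central element acting
without nonzero fixed vectors kills the cohomology. Expanding `c (-1 * A) = c (A * -1)` in both
ways gives `c (-1) - c A = c A + A • c (-1)`, so `c` is the coboundary of `v = -c (-1) / 2`. -/

/-- `H¹(Sp_{2g}(ℤ), ℚ^{2g}) = 0`: every 1-cocycle on the symplectic group with values in the
rational standard representation is a coboundary. -/
theorem h1_sp2g_rat_standard_vanishes
    (g : ℕ) (hg : 1 ≤ g)
    (c : Matrix.symplecticGroup (Fin g) ℤ → (Fin g ⊕ Fin g → ℚ))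
    (hc : ∀ A B : Matrix.symplecticGroup (Fin g) ℤ,
      c (A * B) = c A +
        ((A : Matrix (Fin g ⊕ Fin g) (Fin g ⊕ Fin g) ℤ).map ((↑) : ℤ → ℚ)).mulVec (c B)) :
    ∃ v : Fin g ⊕ Fin g → ℚ,
      ∀ A : Matrix.symplecticGroup (Fin g) ℤ,
        c A = ((A : Matrix (Fin g ⊕ Fin g) (Fin g ⊕ Fin g) ℤ).map ((↑) : ℤ → ℚ)).mulVec v - v := by
  let z : Matrix.symplecticGroup (Fin g) ℤ := ⟨-1, SymplecticGroup.neg_mem (one_mem _)⟩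
  refine ⟨(-1 / 2 : ℚ) • c z, fun A => ?_⟩
  have hcomm : z * A = A * z := Subtype.ext (by simp [z])
  have hz : (z : Matrix (Fin g ⊕ Fin g) (Fin g ⊕ Fin g) ℤ).map ((↑) : ℤ → ℚ) = -1 := by
    ext i j
    simp [z, Matrix.one_apply, apply_ite]
  have h := hc z A
  rw [hcomm, hc A z, hz, Matrix.neg_mulVec, Matrix.one_mulVec] at h
  rw [Matrix.mulVec_smul]
  ext i
  have hi := congrFun h i
  simp only [Pi.add_apply, Pi.neg_apply] at hi
  simp only [Pi.sub_apply, Pi.smul_apply, smul_eq_mul]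
  linarith
end

section
/- For every g ≥ 1, every positive definite symmetric g×g real matrix A can be written as a finite nonnegative linear combination of rank-one matrices built from integer vectors: there exist finitely many vectors x₁, …, x_N ∈ ℤ^g and real numbers c₁, …, c_N ≥ 0 such that A = ∑_{i=1}^N c_i x_i x_iᵀ. -/
/-!
Fix a real matrix `R` with `Rᵀ A R = 1`, and approximate it by rational matrices `n⁻¹ Z` with `Z`
an integer matrix. For large `n` the matrix `n⁻² Zᵀ A Z` is so close to `1` that it equals `1 + E`
with `E` symmetric and all absolute row sums of `E` at most `1`. Such a matrix is a nonnegative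
combination of the forms `x xᵀ` with `x = e i` or `x = e i ± e j` (`one_add_mem_integralCone`).
The cone spanned by the integral forms is stable under congruence by integer matrices
(`congr_mem_integralCone`), so, `Z` being invertible over `ℝ`, congruence by the integer matrix
`adjugate Z` takes `Zᵀ A Z` to `(det Z)² A`, and `A` lies in the cone.
-/

open Matrix
open Filter Topology NNReal

/-- The convex cone of `g × g` matrices spanned by the forms `x xᵀ` with `x` integral, encoded as a
submodule over the semiring of nonnegative reals. -/
noncomputable def integralCone (g : ℕ) : Submodule ℝ≥0 (Matrix (Fin g) (Fin g) ℝ) :=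
  Submodule.span ℝ≥0 (Set.range fun x : Fin g → ℤ => (vecMulVec x x).map ((↑) : ℤ → ℝ))

section

variable {g : ℕ}

lemma vecMulVec_mem_integralCone (x : Fin g → ℤ) :
    (vecMulVec x x).map ((↑) : ℤ → ℝ) ∈ integralCone g :=
  Submodule.subset_span ⟨x, rfl⟩

lemma smul_mem_integralCone {c : ℝ} (hc : 0 ≤ c) {M : Matrix (Fin g) (Fin g) ℝ}
    (hM : M ∈ integralCone g) : c • M ∈ integralCone g :=
  (integralCone g).smul_mem ⟨c, hc⟩ hM

lemma congr_mem_integralCone (P : Matrix (Fin g) (Fin g) ℤ) {M : Matrix (Fin g) (Fin g) ℝ}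
    (hM : M ∈ integralCone g) :
    (P.map ((↑) : ℤ → ℝ))ᵀ * M * P.map ((↑) : ℤ → ℝ) ∈ integralCone g := by
  induction hM using Submodule.span_induction with
  | mem M h =>
    obtain ⟨x, rfl⟩ := h
    convert vecMulVec_mem_integralCone (x ᵥ* P) using 1
    have h : Pᵀ * vecMulVec x x * P = vecMulVec (x ᵥ* P) (x ᵥ* P) := by
      rw [mul_vecMulVec, vecMulVec_mul, mulVec_transpose]
    rw [← h]
    rw [Matrix.map_mul_intCast, Matrix.map_mul_intCast, transpose_map]
  | zero => simp
  | add M N _ _ hM hN => simpa [mul_add, add_mul] using add_mem hM hN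
  | smul c M _ hM => simpa using (integralCone g).smul_mem c hM

lemma single_mem_integralCone (i : Fin g) : single i i (1 : ℝ) ∈ integralCone g := by
  convert vecMulVec_mem_integralCone (Pi.single i 1) using 1
  rw [← single_eq_single_vecMulVec_single]
  ext a b
  simp [single_apply, apply_ite]

/-- The matrix here is `|m| (e i ± e j) (e i ± e j)ᵀ`, with the sign that of `m`. -/
lemma pair_mem_integralCone (i j : Fin g) (m : ℝ) :
    |m| • (single i i 1 + single j j 1) + m • (single i j 1 + single j i 1) ∈ integralCone g := by
  rcases le_total 0 m with h | h
  · convert smul_mem_integralCone h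
      (vecMulVec_mem_integralCone (Pi.single i 1 + Pi.single j 1)) using 1
    simp only [add_vecMulVec, vecMulVec_add, ← single_eq_single_vecMulVec_single, abs_of_nonneg h]
    ext a b
    simp only [single_apply, Matrix.add_apply, Matrix.smul_apply,
      Matrix.map_apply, smul_eq_mul]
    push_cast
    ring
  · convert smul_mem_integralCone (neg_nonneg.2 h)
      (vecMulVec_mem_integralCone (Pi.single i 1 - Pi.single j 1)) using 1
    simp only [sub_vecMulVec, vecMulVec_sub, ← single_eq_single_vecMulVec_single, abs_of_nonpos h]
    ext a b
    simp only [single_apply, Matrix.add_apply, Matrix.sub_apply, Matrix.smul_apply,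
      Matrix.map_apply, smul_eq_mul]
    push_cast
    ring

lemma one_add_mem_integralCone {E : Matrix (Fin g) (Fin g) ℝ} (hE : E.IsSymm)
    (h : ∀ i, ∑ j, |E i j| ≤ 1) : 1 + E ∈ integralCone g := by
  have hsum : (1 / 2 : ℝ) • (∑ i, ∑ j, (|E i j| • (single i i (1 : ℝ) + single j j 1)
        + E i j • (single i j 1 + single j i 1)))
      + ∑ i, (1 - ∑ j, |E i j|) • single i i (1 : ℝ) ∈ integralCone g :=
    add_mem (smul_mem_integralCone (by norm_num)
      (sum_mem fun i _ => sum_mem fun j _ => pair_mem_integralCone i j _))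
      (sum_mem fun i _ => smul_mem_integralCone (sub_nonneg.2 (h i)) (single_mem_integralCone i))
  convert hsum using 1
  have h1 : ∑ i, ∑ j, |E i j| • single j j (1 : ℝ) = ∑ i, ∑ j, |E i j| • single i i (1 : ℝ) := by
    rw [Finset.sum_comm]
    simp only [hE.apply]
  have h2 : ∑ i, ∑ j, E i j • single i j (1 : ℝ) = E := by
    conv_rhs => rw [matrix_eq_sum_single E]
    simp
  have h3 : ∑ i, ∑ j, E i j • single j i (1 : ℝ) = E := by
    rw [Finset.sum_comm]
    simpa only [hE.apply] using h2
  have h4 : ∑ i : Fin g, single i i (1 : ℝ) = 1 := by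
    rw [sum_single_eq_diagonal]; rfl
  simp only [smul_add, Finset.sum_add_distrib, h1, h2, h3, sub_smul, one_smul,
    Finset.sum_sub_distrib, h4, Finset.sum_smul]
  module

lemma tendsto_floor_mul_div (r : ℝ) :
    Tendsto (fun n : ℕ => (n : ℝ)⁻¹ * (⌊(n : ℝ) * r⌋ : ℝ)) atTop (𝓝 r) := by
  have h0 : Tendsto (fun n : ℕ => r - (n : ℝ)⁻¹) atTop (𝓝 r) := by
    simpa using tendsto_const_nhds.sub (tendsto_inv_atTop_nhds_zero_nat (𝕜 := ℝ))
  refine tendsto_of_tendsto_of_tendsto_of_le_of_le' h0 tendsto_const_nhds ?_ ?_ <;>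
    filter_upwards [eventually_gt_atTop 0] with n hn
  · have hn' : (0 : ℝ) < n := by exact_mod_cast hn
    rw [inv_mul_eq_div, le_div_iff₀ hn', sub_mul, inv_mul_cancel₀ hn'.ne']
    linarith [Int.sub_one_lt_floor ((n : ℝ) * r)]
  · have hn' : (0 : ℝ) < n := by exact_mod_cast hn
    rw [inv_mul_eq_div, div_le_iff₀ hn']
    linarith [Int.floor_le ((n : ℝ) * r)]

open scoped MatrixOrder in
lemma exists_transpose_mul_mul_eq_one {A : Matrix (Fin g) (Fin g) ℝ} (hA : A.PosDef) :
    ∃ R : Matrix (Fin g) (Fin g) ℝ, R.det ≠ 0 ∧ Rᵀ * A * R = 1 := by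
  obtain ⟨B, rfl⟩ := CStarAlgebra.nonneg_iff_eq_star_mul_self.1 hA.posSemidef.nonneg
  have hB : IsUnit B.det := by
    have := (isUnit_iff_isUnit_det _).1 hA.isUnit
    rw [det_mul] at this
    exact isUnit_of_mul_isUnit_right this
  refine ⟨B⁻¹, (isUnit_nonsing_inv_det B hB).ne_zero, ?_⟩
  rw [star_eq_conjTranspose, conjTranspose_eq_transpose_of_trivial, ← mul_assoc, ← transpose_mul, mul_nonsing_inv _ hB,
    transpose_one, one_mul, mul_nonsing_inv _ hB]

/-- The matrix `Z` is the entrywise floor of `n R` for large `n`, where `Rᵀ A R = 1`. -/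
lemma exists_int_congr_mem_integralCone {A : Matrix (Fin g) (Fin g) ℝ} (hA : A.PosDef) :
    ∃ Z : Matrix (Fin g) (Fin g) ℤ, Z.det ≠ 0 ∧
      (Z.map ((↑) : ℤ → ℝ))ᵀ * A * Z.map ((↑) : ℤ → ℝ) ∈ integralCone g := by
  obtain ⟨R, hR, hRA⟩ := exists_transpose_mul_mul_eq_one hA
  let Z : ℕ → Matrix (Fin g) (Fin g) ℤ := fun n => of fun i j => ⌊(n : ℝ) * R i j⌋
  let Q : ℕ → Matrix (Fin g) (Fin g) ℝ := fun n => (n : ℝ)⁻¹ • (Z n).map ((↑) : ℤ → ℝ)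
  have hQ : Tendsto Q atTop (𝓝 R) :=
    tendsto_pi_nhds.2 fun i => tendsto_pi_nhds.2 fun j => tendsto_floor_mul_div (R i j)
  have hdet : ∀ᶠ n in atTop, (Q n).det ≠ 0 :=
    ((continuous_id.matrix_det.tendsto R).comp hQ).eventually_ne hR
  have hrow : ∀ᶠ n in atTop, ∀ i, ∑ j, |((Q n)ᵀ * A * Q n - 1) i j| ≤ 1 := by
    refine eventually_all.2 fun i => ?_
    have hc : Continuous fun X : Matrix (Fin g) (Fin g) ℝ => ∑ j, |(Xᵀ * A * X - 1) i j| := by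
      refine continuous_finsetSum _ fun j _ => Continuous.abs ?_
      exact Continuous.matrix_elem (by fun_prop) i j
    have := (hc.tendsto R).comp hQ
    simp only [hRA, Function.comp_def, sub_self, Matrix.zero_apply, abs_zero, Finset.sum_const_zero] at this
    exact (this.eventually_lt_const one_pos).mono fun n hn => hn.le
  obtain ⟨n, hn, hd, hr⟩ := ((eventually_gt_atTop 0).and (hdet.and hrow)).exists
  have hn' : (n : ℝ) ≠ 0 := by exact_mod_cast hn.ne'
  have hAs : Aᵀ = A := by
    rw [← conjTranspose_eq_transpose_of_trivial]; exact hA.isHermitian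
  refine ⟨Z n, fun h0 => hd ?_, ?_⟩
  · have : ((Z n).map ((↑) : ℤ → ℝ)).det = 0 := by
      have := Int.cast_det (R := ℝ) (Z n)
      rw [h0] at this
      simpa using this.symm
    simp [Q, this]
  · have hmem := one_add_mem_integralCone (E := (Q n)ᵀ * A * Q n - 1)
      (by simp [IsSymm, hAs, mul_assoc]) hr
    convert smul_mem_integralCone (sq_nonneg (n : ℝ)) hmem using 1
    simp only [add_sub_cancel, Q, transpose_smul, Matrix.smul_mul, Matrix.mul_smul, smul_smul]
    rw [show (n : ℝ) ^ 2 * ((n : ℝ)⁻¹ * (n : ℝ)⁻¹) = 1 by field_simp, one_smul]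

lemma mem_integralCone_of_posDef {A : Matrix (Fin g) (Fin g) ℝ} (hA : A.PosDef) :
    A ∈ integralCone g := by
  obtain ⟨Z, hZ, hmem⟩ := exists_int_congr_mem_integralCone hA
  have hZ' : (Z.det : ℝ) ≠ 0 := by exact_mod_cast hZ
  have hadj : Z.map ((↑) : ℤ → ℝ) * Z.adjugate.map ((↑) : ℤ → ℝ)
      = (Z.det : ℝ) • (1 : Matrix (Fin g) (Fin g) ℝ) := by
    rw [← Matrix.map_mul_intCast, mul_adjugate]
    ext i j
    simp only [Matrix.map_apply, Matrix.smul_apply, one_apply, smul_eq_mul]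
    push_cast
    rfl
  have key := smul_mem_integralCone (inv_nonneg.2 (sq_nonneg (Z.det : ℝ)))
    (congr_mem_integralCone Z.adjugate hmem)
  convert key using 1
  generalize Z.map ((↑) : ℤ → ℝ) = X at *
  generalize Z.adjugate.map ((↑) : ℤ → ℝ) = Y at *
  have : Yᵀ * (Xᵀ * A * X) * Y = (X * Y)ᵀ * A * (X * Y) := by
    simp only [transpose_mul, mul_assoc]
  rw [this, hadj]
  simp only [transpose_smul, transpose_one, Matrix.smul_mul, Matrix.mul_smul, smul_smul, one_mul, mul_one]
  rw [show ((Z.det : ℝ) ^ 2)⁻¹ * ((Z.det : ℝ) * (Z.det : ℝ)) = 1 by field_simp, one_smul]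

end

/-- Every positive definite symmetric real matrix is a finite nonnegative linear combination
of rank-one matrices `x xᵀ` built from integer vectors. -/
theorem posDef_mem_cone_of_integral_rank_one
    (g : ℕ) (hg : 1 ≤ g) (A : Matrix (Fin g) (Fin g) ℝ) (hA : A.PosDef) :
    ∃ (N : ℕ) (x : Fin N → (Fin g → ℤ)) (c : Fin N → ℝ),
      (∀ i, 0 ≤ c i) ∧
      A = ∑ i, c i • (Matrix.vecMulVec (x i) (x i)).map ((↑) : ℤ → ℝ) := by
  obtain ⟨N, c, s, h⟩ := Submodule.mem_span_set'.1 (mem_integralCone_of_posDef hA)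
  choose x hx using fun i => (s i).2
  refine ⟨N, x, fun i => c i, fun i => (c i).2, ?_⟩
  rw [← h]
  exact Finset.sum_congr rfl fun i _ => by rw [← hx i]; rfl
end
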